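/- For any real sequence (a_k) and any natural number n, Σ_{k=0}^n C(n,k) a_k/(k+1) = (1/(n+1)) · Σ_{m=0}^n b_m, where b_m = Σ_{k=0}^m C(m,k) a_k. -/

import Mathlib

/-! The double sum equals `∑ k, C(n+1,k+1) a_k` by the hockey-stick identity
(`sum_binomial_transform`), and the absorption identity `(n+1) C(n,k) = (k+1) C(n+1,k+1)` turns
`C(n+1,k+1) / (n+1)` into `C(n,k) / (k+1)`, termwise in `k`. -/

open Finset

/-- Interchanging the order of summation, the coefficient of `a k` is `∑_{m=k}^n C(m,k)`, which the
hockey-stick identity evaluates to `C(n+1,k+1)`; the proof is by induction with Pascal's rule. -/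
lemma sum_binomial_transform (a : ℕ → ℝ) (n : ℕ) :
    ∑ m ∈ Finset.range (n + 1), ∑ k ∈ Finset.range (m + 1), (m.choose k : ℝ) * a k =
      ∑ k ∈ Finset.range (n + 1), ((n + 1).choose (k + 1) : ℝ) * a k := by
  induction n with
  | zero => simp
  | succ n ih =>
    -- The term `k = n + 1` has coefficient `C(n+1,n+2) = 0`, so both sums can run over one range.
    have h : ∑ k ∈ Finset.range (n + 1), ((n + 1).choose (k + 1) : ℝ) * a k =
        ∑ k ∈ Finset.range (n + 1 + 1), ((n + 1).choose (k + 1) : ℝ) * a k := by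
      rw [Finset.sum_range_succ _ (n + 1), Nat.choose_succ_self]
      simp
    rw [Finset.sum_range_succ, ih, h, ← Finset.sum_add_distrib]
    refine Finset.sum_congr rfl fun k _ => ?_
    rw [Nat.choose_succ_succ' (n + 1) k]
    push_cast
    ring

/-- For any real sequence `a` and natural `n`,
`∑_{k=0}^n C(n,k) a_k/(k+1) = (1/(n+1)) ∑_{m=0}^n b_m` where `b` is the binomial
transform of `a`. -/
theorem binomial_transform_sum_div (a : ℕ → ℝ) (n : ℕ) :
    ∑ k ∈ Finset.range (n + 1), (n.choose k : ℝ) * a k / ((k : ℝ) + 1) =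
      (1 / ((n : ℝ) + 1)) *
        ∑ m ∈ Finset.range (n + 1), ∑ k ∈ Finset.range (m + 1), (m.choose k : ℝ) * a k := by
  rw [sum_binomial_transform, Finset.mul_sum]
  refine Finset.sum_congr rfl fun k _ => ?_
  -- Absorption: `(n+1) C(n,k) = (k+1) C(n+1,k+1)`.
  have h : ((n : ℝ) + 1) * n.choose k = (n + 1).choose (k + 1) * ((k : ℝ) + 1) := by
    exact_mod_cast Nat.add_one_mul_choose_eq n k
  have hn : (n : ℝ) + 1 ≠ 0 := by positivity
  have hk : (k : ℝ) + 1 ≠ 0 := by positivity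
  field_simp
  linear_combination a k * h
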